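/- If T ∈ M_n(ℂ) satisfies T* = (T T*)^k T for some k ≥ 1, then ker T = ker T². -/

import Mathlib

open Matrix

section StarOrderedRing

variable {m R : Type*} [Fintype m] [DecidableEq m]
  [CommRing R] [PartialOrder R] [StarRing R] [StarOrderedRing R] [NoZeroDivisors R]

theorem ker_mulVecLin_sq_of_ker_le_ker_conjTranspose {T : Matrix m m R}
    (h : LinearMap.ker T.mulVecLin ≤ LinearMap.ker Tᴴ.mulVecLin) :
    LinearMap.ker (T ^ 2).mulVecLin = LinearMap.ker T.mulVecLin := by
  rw [sq, mulVecLin_mul]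
  refine le_antisymm ?_ (LinearMap.ker_le_ker_comp _ _)
  calc LinearMap.ker (T.mulVecLin ∘ₗ T.mulVecLin)
      = (LinearMap.ker T.mulVecLin).comap T.mulVecLin := LinearMap.ker_comp _ _
    _ ≤ (LinearMap.ker Tᴴ.mulVecLin).comap T.mulVecLin := Submodule.comap_mono h
    _ = LinearMap.ker (Tᴴ * T).mulVecLin := by rw [mulVecLin_mul, LinearMap.ker_comp]
    _ = LinearMap.ker T.mulVecLin := by
      ext x
      exact conjTranspose_mul_self_mulVec_eq_zero T x

theorem ker_eq_ker_sq_of_adj_eq_general {S T : Matrix m m R} (h : Tᴴ = S * T) :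
    LinearMap.ker T.mulVecLin = LinearMap.ker (T ^ 2).mulVecLin := by
  refine (ker_mulVecLin_sq_of_ker_le_ker_conjTranspose ?_).symm
  rw [h, mulVecLin_mul]
  exact LinearMap.ker_le_ker_comp _ _

end StarOrderedRing

theorem ker_eq_ker_sq_of_adj_eq (n : ℕ) (T : Matrix (Fin n) (Fin n) ℂ)
    (k : ℕ) (hk : 1 ≤ k) (h : Tᴴ = (T * Tᴴ) ^ k * T) :
    LinearMap.ker T.mulVecLin = LinearMap.ker (T ^ 2).mulVecLin := by
  open scoped ComplexOrder in
  exact ker_eq_ker_sq_of_adj_eq_general h
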